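/- arXiv:1603.03505 — 6 statements merged into one kernel-verified Lean document; each statement's English description precedes it below -/
import Mathlib

section
/- For all real numbers ω ≥ 1, f > 1, m > 1, and x > 1: if f/ln f < ω/ln m, then (ω + f + 1)·(ln x / ln(f·m)) < (ω + 1)·(ln x / ln m). -/
/-- If `f/ln f < ω/ln m` then the total I/O complexity of the fM/B-way mergesort,
`(ω+f+1)·log_{fm} x`, is smaller than the classic mergesort's `(ω+1)·log_m x`. -/
theorem stmt2 (ω f m x : ℝ) (hω : 1 ≤ ω) (hf : 1 < f) (hm : 1 < m) (hx : 1 < x)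
    (h : f / Real.log f < ω / Real.log m) :
    (ω + f + 1) * (Real.log x / Real.log (f * m)) <
      (ω + 1) * (Real.log x / Real.log m) := by
  have hlf := Real.log_pos hf
  have hlm := Real.log_pos hm
  have hlx := Real.log_pos hx
  rw [Real.log_mul (by linarith) (by linarith)]
  rw [div_lt_div_iff₀ hlf hlm] at h
  rw [← mul_div_assoc, ← mul_div_assoc, div_lt_div_iff₀ (by linarith) hlm]
  have key : (ω + f + 1) * Real.log m < (ω + 1) * (Real.log f + Real.log m) := by
    nlinarith
  have := mul_lt_mul_of_pos_right key hlx
  linarith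
end

section
/- Let A₁, …, A_g be pairwise disjoint finite sets of real numbers and let t, r ≥ 1 be integers. For each i, call x ∈ A_i a sample if the rank of x in A_i (its 1-based position in increasing order) is a multiple of t; let S be the set of all samples (from all groups). Call y ∈ S a splitter if the rank of y in S (1-based position in increasing order of S) is a multiple of r. Then every open interval I ⊆ ℝ containing no splitter satisfies |I ∩ (A₁ ∪ ⋯ ∪ A_g)| ≤ t·(r − 1) + g·(t − 1). -/
open scoped Classical

/-- The 1-based rank of `x` in a finite set of reals `s` (its position when `s` is
listed in increasing order), assuming `x ∈ s`. -/
noncomputable def rank (s : Finset ℝ) (x : ℝ) : ℕ :=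
  (s.filter (fun y => y ≤ x)).card

lemma count_dvd (a n t : ℕ) (ht : 1 ≤ t) :
    n ≤ t * ((Finset.Ioc a (a + n)).filter (fun k => t ∣ k)).card + (t - 1) := by
  have h1 := Nat.Ioc_filter_dvd_card_eq_div (a + n) t
  have h2 := Nat.Ioc_filter_dvd_card_eq_div a t
  have h3 : (Finset.Ioc 0 (a + n)).filter (fun k => t ∣ k) ⊆
      (Finset.Ioc 0 a).filter (fun k => t ∣ k) ∪
        (Finset.Ioc a (a + n)).filter (fun k => t ∣ k) := by
    intro x hx
    simp only [Finset.mem_union, Finset.mem_filter, Finset.mem_Ioc] at hx ⊢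
    obtain ⟨⟨_, _⟩, h⟩ := hx
    by_cases hxa : x ≤ a
    · left; exact ⟨⟨by omega, hxa⟩, h⟩
    · right; exact ⟨⟨by omega, by omega⟩, h⟩
  have h4 := (Finset.card_le_card h3).trans (Finset.card_union_le _ _)
  rw [h1, h2] at h4
  have h5 := Nat.div_add_mod (a + n) t
  have h6 := Nat.div_add_mod a t
  have h7 := Nat.mod_lt (a + n) ht
  have h8 := Nat.mul_le_mul_left t h4
  rw [mul_add] at h8
  omega

lemma interval_bound (A : Finset ℝ) (I : Set ℝ) (hI : I.OrdConnected) (t : ℕ) (ht : 1 ≤ t) :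
    (A.filter (fun x => x ∈ I)).card ≤
      t * ((A.filter (fun x => t ∣ rank A x)).filter (fun x => x ∈ I)).card + (t - 1) := by
  set B := A.filter (fun x => x ∈ I) with hB
  rcases B.eq_empty_or_nonempty with h0 | hne
  · simp [h0]
  set m := B.min' hne
  have hm : m ∈ B := B.min'_mem hne
  have hmI : m ∈ I := (Finset.mem_filter.1 hm).2
  set a := (A.filter (fun y => y < m)).card with ha
  have key : ∀ x ∈ B, rank A x = a + (B.filter (fun y => y ≤ x)).card := by
    intro x hx
    have hmx : m ≤ x := B.min'_le x hx
    have hxI : x ∈ I := (Finset.mem_filter.1 hx).2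
    rw [rank, ha, ← Finset.card_union_of_disjoint]
    · congr 1
      ext y
      simp only [Finset.mem_union, Finset.mem_filter, hB]
      constructor
      · rintro ⟨hy, hyx⟩
        rcases lt_or_ge y m with h | h
        · exact Or.inl ⟨hy, h⟩
        · exact Or.inr ⟨⟨hy, hI.out hmI hxI ⟨h, hyx⟩⟩, hyx⟩
      · rintro (⟨hy, h⟩ | ⟨⟨hy, _⟩, h⟩)
        · exact ⟨hy, h.le.trans hmx⟩
        · exact ⟨hy, h⟩
    · rw [Finset.disjoint_left]
      intro y hy hy'
      exact absurd (B.min'_le y (Finset.mem_filter.1 hy').1) (not_le.2 (Finset.mem_filter.1 hy).2)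
  have hmono : ∀ x ∈ B, ∀ y ∈ B, x < y → rank A x < rank A y := by
    intro x hx y hy hxy
    apply Finset.card_lt_card
    rw [Finset.ssubset_iff_of_subset]
    · exact ⟨y, Finset.mem_filter.2 ⟨(Finset.mem_filter.1 hy).1, le_rfl⟩,
        fun h => absurd (Finset.mem_filter.1 h).2 (not_le.2 hxy)⟩
    · intro z hz
      exact Finset.mem_filter.2 ⟨(Finset.mem_filter.1 hz).1, (Finset.mem_filter.1 hz).2.trans hxy.le⟩
  have hinj : Set.InjOn (rank A) (B : Set ℝ) := by
    intro x hx y hy hxy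
    rcases lt_trichotomy x y with h | h | h
    · exact absurd hxy (hmono x hx y hy h).ne
    · exact h
    · exact absurd hxy (hmono y hy x hx h).ne'
  have himg : B.image (rank A) = Finset.Ioc a (a + B.card) := by
    apply Finset.eq_of_subset_of_card_le
    · intro k hk
      obtain ⟨x, hx, rfl⟩ := Finset.mem_image.1 hk
      rw [key x hx, Finset.mem_Ioc]
      have h1 : 0 < (B.filter (fun y => y ≤ x)).card :=
        Finset.card_pos.2 ⟨x, Finset.mem_filter.2 ⟨hx, le_rfl⟩⟩
      have h2 := Finset.card_filter_le B (fun y => y ≤ x)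
      omega
    · rw [Finset.card_image_of_injOn hinj]; simp
  have hcard : ((A.filter (fun x => t ∣ rank A x)).filter (fun x => x ∈ I)).card =
      ((Finset.Ioc a (a + B.card)).filter (fun k => t ∣ k)).card := by
    rw [← himg, Finset.filter_image, Finset.card_image_of_injOn, Finset.filter_comm]
    exact hinj.mono (by intro x hx; exact (Finset.mem_filter.1 hx).1)
  rw [hcard]
  exact count_dvd a _ t ht

/-- Deterministic splitter-sampling lemma: with samples every `t`-th element of each
group and splitters every `r`-th sample, any open interval containing no splitter
contains at most `t·(r−1) + g·(t−1)` elements of the union of the groups. -/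
theorem stmt3 (g : ℕ) (A : Fin g → Finset ℝ)
    (hdisj : ∀ i j, i ≠ j → Disjoint (A i) (A j))
    (t r : ℕ) (ht : 1 ≤ t) (hr : 1 ≤ r)
    (S : Finset ℝ)
    (hS : S = Finset.univ.biUnion (fun i => (A i).filter (fun x => t ∣ rank (A i) x)))
    (I : Set ℝ) (hIopen : IsOpen I) (hIconn : I.OrdConnected)
    (hnosplitter : ∀ y ∈ S.filter (fun y => r ∣ rank S y), y ∉ I) :
    ((Finset.univ.biUnion A).filter (fun x => x ∈ I)).card ≤ t * (r - 1) + g * (t - 1) := by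
  have hSI : (S.filter (fun x => x ∈ I)).card ≤ r - 1 := by
    have h := interval_bound S I hIconn r hr
    rw [Finset.filter_eq_empty_iff.2 (fun {y} hy => hnosplitter y hy)] at h
    simpa using h
  have hsum : ∑ i, (((A i).filter (fun x => t ∣ rank (A i) x)).filter (fun x => x ∈ I)).card =
      (S.filter (fun x => x ∈ I)).card := by
    rw [hS, Finset.filter_biUnion, Finset.card_biUnion]
    intro i _ j _ hij
    refine (hdisj i j hij).mono ?_ ?_ <;>
      exact (Finset.filter_subset _ _).trans (Finset.filter_subset _ _)
  calc _ ≤ ∑ i, ((A i).filter (fun x => x ∈ I)).card := by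
        rw [Finset.filter_biUnion]; exact Finset.card_biUnion_le
    _ ≤ ∑ i, (t * (((A i).filter (fun x => t ∣ rank (A i) x)).filter (fun x => x ∈ I)).card
          + (t - 1)) := Finset.sum_le_sum (fun i _ => interval_bound (A i) I hIconn t ht)
    _ = t * (S.filter (fun x => x ∈ I)).card + g * (t - 1) := by
        rw [Finset.sum_add_distrib, ← Finset.mul_sum, hsum]; simp
    _ ≤ _ := by gcongr
end

section
/- Let A₁, …, A_g be pairwise disjoint finite sets of real numbers, let t, r ≥ 1 be integers, define samples and splitters as follows: x ∈ A_i is a sample if its rank in A_i (1-based position in increasing order) is a multiple of t, S is the set of all samples, and y ∈ S is a splitter if its rank in S is a multiple of r. If G is a real number with g ≤ G and r·t ≤ G, then every open interval I ⊆ ℝ containing no splitter satisfies |I ∩ (A₁ ∪ ⋯ ∪ A_g)| ≤ 2·G·t. -/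
open scoped Classical

theorem rank_image (T : Finset ℝ) : T.image (rank T) = Finset.Icc 1 T.card := by
  have hmono : ∀ x ∈ T, ∀ y ∈ T, x < y → rank T x < rank T y := by
    intro x hx y hy hxy
    unfold rank
    apply Finset.card_lt_card
    rw [Finset.ssubset_iff_of_subset]
    · exact ⟨y, by simp [hy], by simp [hxy]⟩
    · intro z hz
      simp only [Finset.mem_filter] at hz ⊢
      exact ⟨hz.1, hz.2.trans hxy.le⟩
  apply Finset.eq_of_subset_of_card_le
  · intro k hk
    obtain ⟨x, hx, rfl⟩ := Finset.mem_image.1 hk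
    rw [Finset.mem_Icc]
    unfold rank
    exact ⟨Finset.card_pos.2 ⟨x, by simp [hx]⟩, Finset.card_filter_le _ _⟩
  · rw [Finset.card_image_of_injOn]
    · simp
    · intro x hx y hy hxy
      rcases lt_trichotomy x y with h | h | h
      · exact absurd hxy (hmono x hx y hy h).ne
      · exact h
      · exact absurd hxy (hmono y hy x hx h).ne'

theorem count_mult (a n m : ℕ) (hm : 1 ≤ m) :
    n < m * ((Finset.Ioc a (a + n)).filter (fun k => m ∣ k)).card + m := by
  have h1 := Nat.Ioc_filter_dvd_card_eq_div (a + n) m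
  have h2 := Nat.Ioc_filter_dvd_card_eq_div a m
  have h3 : ((Finset.Ioc 0 (a + n)).filter (fun k => m ∣ k)).card ≤
      ((Finset.Ioc 0 a).filter (fun k => m ∣ k)).card +
      ((Finset.Ioc a (a + n)).filter (fun k => m ∣ k)).card := by
    refine le_trans (Finset.card_le_card ?_) (Finset.card_union_le _ _)
    intro k hk
    simp only [Finset.mem_union, Finset.mem_filter, Finset.mem_Ioc] at hk ⊢
    have := le_or_gt k a
    tauto
  rw [h1, h2] at h3
  have h4 := Nat.mul_le_mul_left m h3
  have h5 := Nat.lt_mul_div_succ (a + n) hm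
  have h6 := Nat.mul_div_le a m
  rw [mul_add] at h4 h5
  omega

theorem key_count (s : Finset ℝ) (m : ℕ) (hm : 1 ≤ m) (I : Set ℝ) (hI : I.OrdConnected) :
    (s.filter (fun x => x ∈ I)).card <
      m * ((s.filter (fun x => m ∣ rank s x)).filter (fun x => x ∈ I)).card + m := by
  set T := s.filter (fun x => x ∈ I) with hT
  set L := s.filter (fun y => y ∉ I ∧ ∃ z ∈ I, y < z) with hL
  have hrank : ∀ x ∈ T, rank s x = L.card + rank T x := by
    intro x hx
    obtain ⟨hxs, hxI⟩ := Finset.mem_filter.1 hx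
    unfold rank
    rw [← Finset.card_union_of_disjoint]
    · congr 1
      ext y
      simp only [hT, hL, Finset.mem_union, Finset.mem_filter]
      constructor
      · rintro ⟨h1, h2⟩
        by_cases hy : y ∈ I
        · exact Or.inr ⟨⟨h1, hy⟩, h2⟩
        · refine Or.inl ⟨h1, hy, x, hxI, lt_of_le_of_ne h2 ?_⟩
          rintro rfl
          exact hy hxI
      · rintro (⟨h1, hy, z, hz, hyz⟩ | ⟨⟨h1, _⟩, h2⟩)
        · refine ⟨h1, ?_⟩
          by_contra hc
          exact hy (hI.out hxI hz ⟨(not_le.1 hc).le, hyz.le⟩)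
        · exact ⟨h1, h2⟩
    · rw [Finset.disjoint_left]
      intro y hy hy'
      simp only [hT, hL, Finset.mem_filter] at hy hy'
      exact hy.2.1 hy'.1.2
  refine lt_of_lt_of_le (count_mult L.card T.card m hm) ?_
  gcongr
  refine le_trans (Finset.card_le_card ?_) (Finset.card_image_le (f := rank s))
  intro k hk
  simp only [Finset.mem_filter, Finset.mem_Ioc] at hk
  have hk' : k - L.card ∈ T.image (rank T) := by
    rw [rank_image, Finset.mem_Icc]
    omega
  obtain ⟨x, hx, hxk⟩ := Finset.mem_image.1 hk'
  have hr := hrank x hx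
  have hxx : rank s x = k := by omega
  have hx' := Finset.mem_filter.1 hx
  refine Finset.mem_image.2 ⟨x, ?_, hxx⟩
  simp only [Finset.mem_filter]
  exact ⟨⟨hx'.1, hxx ▸ hk.2⟩, hx'.2⟩

/-- Instantiation of the splitter-sampling lemma for the low-depth cache-oblivious
sort: if `g ≤ G` and `r·t ≤ G` then any open interval containing no splitter has at
most `2·G·t` elements of the union of the groups. -/
theorem stmt5 (g : ℕ) (A : Fin g → Finset ℝ)
    (hdisj : ∀ i j, i ≠ j → Disjoint (A i) (A j))
    (t r : ℕ) (ht : 1 ≤ t) (hr : 1 ≤ r)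
    (S : Finset ℝ)
    (hS : S = Finset.univ.biUnion (fun i => (A i).filter (fun x => t ∣ rank (A i) x)))
    (G : ℝ) (hgG : (g : ℝ) ≤ G) (hrtG : (r * t : ℝ) ≤ G)
    (I : Set ℝ) (hIopen : IsOpen I) (hIconn : I.OrdConnected)
    (hnosplitter : ∀ y ∈ S.filter (fun y => r ∣ rank S y), y ∉ I) :
    ((((Finset.univ.biUnion A).filter (fun x => x ∈ I)).card : ℝ)) ≤ 2 * G * t := by
  have hSr := key_count S r hr I hIconn
  have h0 : ((S.filter (fun y => r ∣ rank S y)).filter (fun x => x ∈ I)) = ∅ := by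
    rw [Finset.filter_eq_empty_iff]
    exact fun y hy => hnosplitter y hy
  rw [h0, Finset.card_empty, mul_zero, zero_add] at hSr
  have hsum : ∑ i, (((A i).filter (fun x => t ∣ rank (A i) x)).filter (fun x => x ∈ I)).card
      = (S.filter (fun x => x ∈ I)).card := by
    rw [hS, Finset.filter_biUnion, Finset.card_biUnion]
    intro i _ j _ hij
    exact (hdisj i j hij).mono
      ((Finset.filter_subset _ _).trans (Finset.filter_subset _ _))
      ((Finset.filter_subset _ _).trans (Finset.filter_subset _ _))
  have hmain : ((Finset.univ.biUnion A).filter (fun x => x ∈ I)).card ≤ t * r + g * t := by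
    rw [Finset.filter_biUnion]
    calc _ ≤ ∑ i, ((A i).filter (fun x => x ∈ I)).card := Finset.card_biUnion_le
      _ ≤ ∑ i, (t * (((A i).filter (fun x => t ∣ rank (A i) x)).filter
            (fun x => x ∈ I)).card + t) :=
          Finset.sum_le_sum fun i _ => (key_count (A i) t ht I hIconn).le
      _ = t * (S.filter (fun x => x ∈ I)).card + g * t := by
          rw [Finset.sum_add_distrib, ← Finset.mul_sum, hsum]
          simp
      _ ≤ t * r + g * t := by gcongr
  have hmain' : ((((Finset.univ.biUnion A).filter (fun x => x ∈ I)).card : ℝ))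
      ≤ t * r + g * t := by exact_mod_cast hmain
  have ht' : (1 : ℝ) ≤ t := by exact_mod_cast ht
  have hg0 : (0 : ℝ) ≤ g := Nat.cast_nonneg g
  nlinarith [mul_nonneg (hg0.trans hgG) (sub_nonneg.2 ht'),
    mul_nonneg (sub_nonneg.2 hgG) (zero_le_one.trans ht')]
end

section
/- There is an absolute constant C such that the following holds. Let ω ≥ 1, M ≥ 2, and c > 0 be real numbers, and let D be a nonnegative real-valued function on the positive reals satisfying: D(n) ≤ c·ω for all 0 < n ≤ M, and D(n) ≤ 2·D(√(n/ω)) + c·ω·log₂ n for all n > M. Then D(n) ≤ C·c·ω·log₂(ω·n)·(1 + log₂ log₂ (ω·n)) for all n > M. -/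
/-- The depth recurrence of the asymmetric cache-oblivious FFT:
`D(n) ≤ 2·D(√(n/ω)) + c·ω·log₂ n` with base case `D(n) ≤ c·ω` for `n ≤ M` solves to
`D(n) = O(ω·log(ωn)·log log(ωn))`. -/
theorem stmt10 : ∃ C : ℝ, ∀ (ω M c : ℝ) (D : ℝ → ℝ),
    1 ≤ ω → 2 ≤ M → 0 < c →
    (∀ n : ℝ, 0 < n → 0 ≤ D n) →
    (∀ n : ℝ, 0 < n → n ≤ M → D n ≤ c * ω) →
    (∀ n : ℝ, M < n → D n ≤ 2 * D (Real.sqrt (n / ω)) + c * ω * Real.logb 2 n) →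
    ∀ n : ℝ, M < n →
      D n ≤ C * c * ω * Real.logb 2 (ω * n) * (1 + Real.logb 2 (Real.logb 2 (ω * n))) := by
  refine ⟨3, ?_⟩
  intro ω M c D hω hM hc _ hbase hrec
  have hω0 : 0 < ω := by linarith
  have hcω : 0 < c * ω := mul_pos hc hω0
  have hL1 : ∀ n : ℝ, M < n → 1 < Real.logb 2 (ω * n) := by
    intro n hn
    rw [Real.lt_logb_iff_rpow_lt (by norm_num) (by nlinarith)]
    rw [Real.rpow_one]
    nlinarith
  have key : ∀ k : ℕ, ∀ n : ℝ, M < n → Real.logb 2 (ω * n) ≤ 2 ^ k →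
      D n ≤ 3 * c * ω * Real.logb 2 (ω * n) * (1 + Real.logb 2 (Real.logb 2 (ω * n))) := by
    intro k
    induction k with
    | zero =>
      intro n hn hk
      have := hL1 n hn
      norm_num at hk
      linarith
    | succ k ih =>
      intro n hn hk
      have h1 := hL1 n hn
      have hn0 : 0 < n := by linarith
      have hm0 : 0 < Real.sqrt (n / ω) := Real.sqrt_pos.mpr (div_pos hn0 hω0)
      have hr := hrec n hn
      have hlogω : 0 ≤ Real.logb 2 ω := Real.logb_nonneg (by norm_num) hω
      have hsplit : Real.logb 2 (ω * n) = Real.logb 2 ω + Real.logb 2 n :=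
        Real.logb_mul hω0.ne' hn0.ne'
      have hhalf : Real.logb 2 (ω * Real.sqrt (n / ω)) = Real.logb 2 (ω * n) / 2 := by
        have h2 : Real.logb 2 (Real.sqrt (n / ω)) = (Real.logb 2 n - Real.logb 2 ω) / 2 := by
          rw [← Real.logb_div hn0.ne' hω0.ne']
          simp only [Real.logb, Real.log_sqrt (div_pos hn0 hω0).le]
          ring
        rw [Real.logb_mul hω0.ne' hm0.ne', h2, hsplit]
        ring
      have hle : c * ω * Real.logb 2 n ≤ c * ω * Real.logb 2 (ω * n) :=
        mul_le_mul_of_nonneg_left (by linarith) hcω.le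
      have hLL : 0 ≤ Real.logb 2 (Real.logb 2 (ω * n)) :=
        Real.logb_nonneg (by norm_num) h1.le
      by_cases hm : Real.sqrt (n / ω) ≤ M
      · have hb := hbase _ hm0 hm
        have h3 : c * ω * 1 ≤ c * ω * Real.logb 2 (ω * n) :=
          mul_le_mul_of_nonneg_left h1.le hcω.le
        have h4 : 0 ≤ c * ω * Real.logb 2 (ω * n) * Real.logb 2 (Real.logb 2 (ω * n)) :=
          mul_nonneg (by linarith) hLL
        linarith
      · have hi := ih _ (not_le.mp hm) (by rw [hhalf]; rw [pow_succ] at hk; linarith)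
        have h5 : Real.logb 2 (Real.logb 2 (ω * n) / 2)
            = Real.logb 2 (Real.logb 2 (ω * n)) - 1 := by
          rw [Real.logb_div (by linarith) (by norm_num), Real.logb_self_eq_one (by norm_num)]
        rw [hhalf, h5] at hi
        have h3 : 0 ≤ c * ω * Real.logb 2 (ω * n) := mul_nonneg hcω.le (by linarith)
        linarith
  intro n hn
  obtain ⟨k, hk⟩ := pow_unbounded_of_one_lt (Real.logb 2 (ω * n)) (one_lt_two (α := ℝ))
  exact key k n hn hk.le
end

section
/- There is an absolute constant C such that the following holds. Let c > 0, ω ≥ 1, and M ≥ 2^{16} be real numbers, and let D be a nonnegative real-valued function on the positive reals such that: (i) D(n) ≤ c·ω for all 0 < n ≤ M, and (ii) for every n > M there exist finitely many reals n₁, …, n_j, each satisfying 0 < n_i ≤ √(n/ω)·log₂ n, with D(n) ≤ c·ω·(log₂ n)² + max_{1 ≤ i ≤ j} D(n_i). Then D(n) ≤ C·c·ω·(log₂ n)² for all n > M. -/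
theorem logb_le_quarter (L : ℝ) (hL : 16 ≤ L) : Real.logb 2 L ≤ L / 4 := by
  have h2 : (0.6931471803 : ℝ) < Real.log 2 := Real.log_two_gt_d9
  have hpos : (0:ℝ) < Real.log 2 := by linarith
  have h1 : Real.log (L / 16) ≤ L / 16 - 1 := Real.log_le_sub_one_of_pos (by linarith)
  rw [Real.log_div (by linarith) (by norm_num)] at h1
  have h16 : Real.log 16 = 4 * Real.log 2 := by
    rw [show (16:ℝ) = 2 ^ 4 by norm_num, Real.log_pow]; norm_num
  rw [Real.logb, div_le_iff₀ hpos]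
  nlinarith

/-- The depth recurrence of the low-depth asymmetric cache-oblivious sort:
`D(n) ≤ c·ω·(log₂ n)² + max_i D(nᵢ)` with sub-bucket sizes `nᵢ ≤ √(n/ω)·log₂ n`
and base case `D(n) ≤ c·ω` for `n ≤ M` solves to `D(n) = O(ω·(log₂ n)²)`. -/
theorem stmt11 : ∃ C : ℝ, ∀ (c ω M : ℝ) (D : ℝ → ℝ),
    0 < c → 1 ≤ ω → (2:ℝ) ^ 16 ≤ M →
    (∀ n : ℝ, 0 < n → 0 ≤ D n) →
    (∀ n : ℝ, 0 < n → n ≤ M → D n ≤ c * ω) →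
    (∀ n : ℝ, M < n → ∃ (j : ℕ) (ns : Fin j → ℝ), 1 ≤ j ∧
      (∀ i, 0 < ns i ∧ ns i ≤ Real.sqrt (n / ω) * Real.logb 2 n) ∧
      D n ≤ c * ω * (Real.logb 2 n) ^ 2 + ⨆ i, D (ns i)) →
    ∀ n : ℝ, M < n → D n ≤ C * c * ω * (Real.logb 2 n) ^ 2 := by
  refine ⟨3, ?_⟩
  intro c ω M D hc hω hM hD0 hbase hrec
  have hlog : ∀ n : ℝ, M < n → 16 ≤ Real.logb 2 n := by
    intro n hn
    rw [Real.le_logb_iff_rpow_le (by norm_num) (by linarith [show (0:ℝ) < 2 ^ 16 by norm_num])]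
    have : (2:ℝ) ^ (16:ℝ) = 2 ^ 16 := by norm_num
    linarith
  have key : ∀ k : ℕ, ∀ n : ℝ, M < n → Real.logb 2 n ≤ k + 16 →
      D n ≤ 3 * c * ω * (Real.logb 2 n) ^ 2 := by
    intro k
    induction k using Nat.strong_induction_on with
    | _ k ih =>
    intro n hn hk
    have hL := hlog n hn
    have hq := logb_le_quarter _ hL
    have hn0 : 0 < n := by linarith [show (0:ℝ) < 2 ^ 16 by norm_num]
    obtain ⟨j, ns, hj, hns, hDn⟩ := hrec n hn
    set L := Real.logb 2 n with hLdef
    have hcω : 0 < c * ω := by positivity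
    haveI : Nonempty (Fin j) := ⟨⟨0, hj⟩⟩
    have hsup : ⨆ i, D (ns i) ≤ 27 / 16 * (c * ω) * L ^ 2 := by
      apply ciSup_le
      intro i
      obtain ⟨hp, hle⟩ := hns i
      by_cases hi : ns i ≤ M
      · have := hbase _ hp hi
        nlinarith [mul_le_mul_of_nonneg_left (show (1:ℝ) ≤ L ^ 2 by nlinarith) hcω.le]
      · push Not at hi
        have hli := hlog _ hi
        have h3 : Real.logb 2 (ns i) ≤ 3 / 4 * L := by
          have hle2 : ns i ≤ Real.sqrt n * L := by
            refine hle.trans ?_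
            gcongr
            exact div_le_self hn0.le hω
          have hm := Real.logb_le_logb_of_le (b := 2) (by norm_num) hp hle2
          have hs : Real.sqrt n ≠ 0 := (Real.sqrt_pos.mpr hn0).ne'
          rw [Real.logb_mul hs (by linarith)] at hm
          have : Real.logb 2 (Real.sqrt n) = L / 2 := by
            rw [hLdef, Real.logb, Real.logb, Real.log_sqrt hn0.le]; ring
          linarith
        have hk1 : 1 ≤ k := by
          by_contra h
          have : k = 0 := by omega
          subst this
          norm_num at hk
          linarith
        have := ih (k - 1) (by omega) (ns i) hi (by
          rw [Nat.cast_sub hk1]; push_cast; linarith)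
        have hsq : Real.logb 2 (ns i) ^ 2 ≤ 9 / 16 * L ^ 2 := by nlinarith
        nlinarith [mul_le_mul_of_nonneg_left hsq hcω.le]
    have : 0 ≤ c * ω * L ^ 2 := by positivity
    nlinarith
  intro n hn
  obtain ⟨k, hk⟩ := exists_nat_ge (Real.logb 2 n)
  exact key k n hn (by linarith)
end

section
/- Let A be a set of N ≥ 1 distinct real numbers, let ω ≥ 2 and q ≥ 1 be integers, and let s = ω·q. Let Y₁, …, Y_s be independent samples drawn uniformly at random from A (with replacement). Sort the samples (with multiplicity) and let p_j be the sample in sorted position j·q, for j = 1, …, ω − 1 (the pivots). Define ω buckets: B₀ = {a ∈ A : a < p₁}, B_j = {a ∈ A : p_j < a < p_{j+1}} for 1 ≤ j ≤ ω − 2, and B_{ω−1} = {a ∈ A : a > p_{ω−1}}. Then the probability that some bucket contains more than 4·N/ω elements of A is at most N·exp(−q/2). -/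
open scoped Classical

/-- Given `s` samples `f : Fin s → A` drawn from the finite set `A` of reals, `pivot`
returns the sample (with multiplicity) in sorted position `j·q` (1-based). -/
noncomputable def pivot (A : Finset ℝ) (s q : ℕ) (f : Fin s → {x // x ∈ A}) (j : ℕ) : ℝ :=
  ((Multiset.map (fun i => (f i : ℝ)) (Finset.univ : Finset (Fin s)).val).sort (· ≤ ·)).getD
    (j * q - 1) 0

/-- The `j`-th bucket (for `0 ≤ j ≤ ω − 1`) determined by the pivots
`p_1 < ⋯ < p_{ω−1}`: `B₀ = {a < p₁}`, `B_j = {p_j < a < p_{j+1}}` for `1 ≤ j ≤ ω−2`,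
and `B_{ω−1} = {a > p_{ω−1}}`. -/
noncomputable def bucket (A : Finset ℝ) (s q ω : ℕ) (f : Fin s → {x // x ∈ A}) (j : ℕ) :
    Finset ℝ :=
  A.filter (fun a =>
    (j = 0 ∨ pivot A s q f j < a) ∧ (j = ω - 1 ∨ a < pivot A s q f (j + 1)))

lemma chernoff_aux (A : Finset ℝ) (N : ℕ) (hN : A.card = N) (hN1 : 1 ≤ N)
    (ω q : ℕ) (hω : 2 ≤ ω) (s : ℕ) (hs : s = ω * q) (S : Finset {x // x ∈ A})
    (hS : 4 * (N : ℝ) / (ω : ℝ) < (S.card : ℝ)) :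
    (((Finset.univ : Finset (Fin s → {x // x ∈ A})).filter
        (fun f => ((Finset.univ : Finset (Fin s)).filter (fun i => f i ∈ S)).card ≤ q)).card : ℝ)
      ≤ (N : ℝ) ^ s * Real.exp (-(q : ℝ) / 2) := by
  have hNpos : (0 : ℝ) < N := by exact_mod_cast hN1
  have hωpos : (0 : ℝ) < ω := by exact_mod_cast (by omega : 0 < ω)
  have he : Real.exp (-1) ≤ 1 / 2 := by
    rw [Real.exp_neg, one_div]
    apply inv_anti₀ (by norm_num)
    have := Real.add_one_le_exp (1 : ℝ)
    linarith
  set w : {x // x ∈ A} → ℝ := fun x => if x ∈ S then Real.exp (-1) else 1 with hw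
  have hwpos : ∀ x, 0 < w x := by
    intro x
    simp only [hw]
    split_ifs
    · exact Real.exp_pos _
    · norm_num
  have hprod : ∀ f : Fin s → {x // x ∈ A}, ∏ i, w (f i) =
      Real.exp (-(((Finset.univ : Finset (Fin s)).filter (fun i => f i ∈ S)).card : ℝ)) := by
    intro f
    simp only [hw]
    rw [Finset.prod_ite, Finset.prod_const, Finset.prod_const_one, mul_one, ← Real.exp_nat_mul]
    simp
  have h1 : (((Finset.univ : Finset (Fin s → {x // x ∈ A})).filter
        (fun f => ((Finset.univ : Finset (Fin s)).filter (fun i => f i ∈ S)).card ≤ q)).card : ℝ)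
      ≤ ∑ f : Fin s → {x // x ∈ A}, Real.exp q * ∏ i, w (f i) := by
    rw [Finset.card_filter]
    push_cast
    apply Finset.sum_le_sum
    intro f _
    split_ifs with h
    · rw [hprod, ← Real.exp_add]
      apply Real.one_le_exp
      have : ((((Finset.univ : Finset (Fin s)).filter (fun i => f i ∈ S)).card : ℕ) : ℝ) ≤ q := by
        exact_mod_cast h
      linarith
    · exact mul_nonneg (Real.exp_pos _).le (Finset.prod_nonneg fun i _ => (hwpos _).le)
  have hsum : ∑ x, w x ≤ N * Real.exp (-(2 / ω)) := by
    have e1 : ∑ x, w x = ∑ x : {x // x ∈ A}, (1 - (if x ∈ S then 1 - Real.exp (-1) else 0)) := by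
      apply Finset.sum_congr rfl
      intro x _
      simp only [hw]
      split_ifs <;> ring
    have e2 : ∑ x, w x = N - S.card * (1 - Real.exp (-1)) := by
      rw [e1, Finset.sum_sub_distrib, Finset.sum_ite_mem, Finset.univ_inter, Finset.sum_const,
        Finset.sum_const, Finset.card_univ, Fintype.card_coe, hN]
      simp
    have e3 := Real.add_one_le_exp (-(2 / (ω : ℝ)))
    have e4 : (N : ℝ) * (-(2 / (ω : ℝ)) + 1) ≤ N * Real.exp (-(2 / ω)) := by gcongr
    have e5 : (4 * (N : ℝ) / ω) * (1 / 2) ≤ S.card * (1 - Real.exp (-1)) := by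
      apply mul_le_mul hS.le (by linarith) (by norm_num) (by positivity)
    have e6 : (4 * (N : ℝ) / ω) * (1 / 2) = N * (2 / ω) := by ring
    rw [e2]
    nlinarith
  refine h1.trans ?_
  rw [← Finset.mul_sum, ← Fintype.sum_pow]
  have h2 : (∑ x, w x) ^ s ≤ (N * Real.exp (-(2 / ω))) ^ s := by
    apply pow_le_pow_left₀ _ hsum
    exact Finset.sum_nonneg fun x _ => (hwpos x).le
  calc Real.exp q * (∑ x, w x) ^ s ≤ Real.exp q * (N * Real.exp (-(2 / ω))) ^ s := by gcongr
    _ = N ^ s * Real.exp (q + s * (-(2 / ω))) := by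
      rw [mul_pow, ← Real.exp_nat_mul, Real.exp_add]; ring
    _ ≤ _ := by
      gcongr
      have : (s : ℝ) * (-(2 / ω)) = - (2 * q) := by
        rw [hs]; push_cast; field_simp
      rw [this]
      have : (0 : ℝ) ≤ q := by positivity
      linarith

lemma interval_aux (A : Finset ℝ) (N : ℕ) (hN : A.card = N) (hN1 : 1 ≤ N)
    (ω q : ℕ) (hω : 2 ≤ ω) (s : ℕ) (hs : s = ω * q) (a : ℝ) :
    (((Finset.univ : Finset (Fin s → {x // x ∈ A})).filter
        (fun f => ∃ b ∈ A, 4 * (N : ℝ) / (ω : ℝ) <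
            ((A.filter (fun x => a ≤ x ∧ x ≤ b)).card : ℝ) ∧
          ((Finset.univ : Finset (Fin s)).filter
            (fun i => a ≤ (f i : ℝ) ∧ (f i : ℝ) ≤ b)).card ≤ q)).card : ℝ)
      ≤ (N : ℝ) ^ s * Real.exp (-(q : ℝ) / 2) := by
  set C := A.filter (fun b => 4 * (N : ℝ) / (ω : ℝ) <
            ((A.filter (fun x => a ≤ x ∧ x ≤ b)).card : ℝ)) with hC
  by_cases hne : C.Nonempty
  · obtain ⟨b₀, hb₀, hmin⟩ := C.exists_min_image id hne
    rw [hC, Finset.mem_filter] at hb₀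
    set S : Finset {x // x ∈ A} :=
      Finset.univ.filter (fun x => a ≤ (x : ℝ) ∧ (x : ℝ) ≤ b₀) with hS
    have hcard : (A.filter (fun x => a ≤ x ∧ x ≤ b₀)).card = S.card := by
      rw [← Finset.card_map (Function.Embedding.subtype (fun x => x ∈ A)) (s := S)]
      congr 1
      ext x
      simp [hS]
      tauto
    refine le_trans ?_ (chernoff_aux A N hN hN1 ω q hω s hs S (by rw [← hcard]; exact hb₀.2))
    refine Nat.cast_le.2 (Finset.card_le_card ?_)
    intro f hf
    rw [Finset.mem_filter] at hf ⊢
    obtain ⟨_, b, hb, hb1, hb2⟩ := hf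
    refine ⟨Finset.mem_univ _, le_trans (Finset.card_le_card ?_) hb2⟩
    have hle : b₀ ≤ b := hmin b (by rw [hC, Finset.mem_filter]; exact ⟨hb, hb1⟩)
    intro i hi
    simp only [hS, Finset.mem_filter, Finset.mem_univ, true_and] at hi ⊢
    exact ⟨hi.1, hi.2.trans hle⟩
  · rw [Finset.filter_false_of_mem]
    · simp only [Finset.card_empty, Nat.cast_zero]; positivity
    · rintro f - ⟨b, hb, hb1, -⟩
      exact hne ⟨b, by rw [hC, Finset.mem_filter]; exact ⟨hb, hb1⟩⟩

lemma bucket_samples (A : Finset ℝ) (ω q : ℕ) (hω : 2 ≤ ω) (hq : 1 ≤ q) (s : ℕ)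
    (hs : s = ω * q) (f : Fin s → {x // x ∈ A}) (j : ℕ) (hj : j < ω) :
    ((Finset.univ : Finset (Fin s)).filter (fun i => (f i : ℝ) ∈ bucket A s q ω f j)).card
      ≤ q := by
  set M := Multiset.map (fun i => (f i : ℝ)) (Finset.univ : Finset (Fin s)).val with hM
  set L := M.sort (· ≤ ·) with hL
  have hLM : (L : Multiset ℝ) = M := Multiset.sort_eq _ _
  have hlen : L.length = s := by rw [hL, Multiset.length_sort, hM]; simp
  have hsort : L.Pairwise (· ≤ ·) := Multiset.pairwise_sort _ _
  have hmono : ∀ k l (hk : k < L.length) (hl : l < L.length), k ≤ l → L[k] ≤ L[l] := by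
    intro k l hk hl hkl
    rcases hkl.eq_or_lt with h | h
    · subst h; exact le_rfl
    · exact List.pairwise_iff_getElem.1 hsort k l hk hl h
  have hpiv : ∀ t, pivot A s q f t = L.getD (t * q - 1) 0 := fun t => rfl
  have hM2 : Multiset.map L.get (Finset.univ : Finset (Fin L.length)).val = M := by
    rw [Fin.univ_val_map, List.ofFn_get, hLM]
  have key : ((Finset.univ : Finset (Fin s)).filter (fun i => (f i : ℝ) ∈ bucket A s q ω f j)).card
      = ((Finset.univ : Finset (Fin L.length)).filter
          (fun k => L.get k ∈ bucket A s q ω f j)).card := by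
    have e1 : Multiset.countP (fun x => x ∈ bucket A s q ω f j) M = ((Finset.univ : Finset (Fin s)).filter (fun i => (f i : ℝ) ∈ bucket A s q ω f j)).card := by
      rw [hM, Multiset.countP_map]; rfl
    have e2 : Multiset.countP (fun x => x ∈ bucket A s q ω f j) M =
      ((Finset.univ : Finset (Fin L.length)).filter
          (fun k => L.get k ∈ bucket A s q ω f j)).card := by
      rw [← hM2, Multiset.countP_map]; rfl
    rw [← e1, e2]
  rw [key]
  have : (Finset.Ico (j * q) ((j + 1) * q)).card = q := by
    rw [Nat.card_Ico, add_mul]; omega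
  refine le_trans ?_ this.le
  apply Finset.card_le_card_of_injOn (fun k : Fin L.length => (k : ℕ))
  · intro k hk
    have hk' := k.2
    have hjq : (j + 1) * q ≤ ω * q := Nat.mul_le_mul_right _ hj
    have hjq1 : (j + 1) * q = j * q + q := by ring
    simp only [bucket, Finset.coe_filter, Finset.mem_filter, Finset.mem_univ, true_and,
      Set.mem_setOf_eq, hpiv, List.get_eq_getElem] at hk
    obtain ⟨_, h1, h2⟩ := hk
    simp only [Finset.coe_Ico, Set.mem_Ico]
    constructor
    · rcases h1 with h1 | h1
      · subst h1; simp
      · by_contra hlt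
        rw [List.getD_eq_getElem _ _ (by omega)] at h1
        exact absurd h1 (not_lt.2 (hmono _ _ _ _ (by omega)))
    · rcases h2 with h2 | h2
      · have : j + 1 = ω := by omega
        rw [this, ← hs]; omega
      · by_contra hlt
        rw [List.getD_eq_getElem _ _ (by omega)] at h2
        exact absurd h2 (not_lt.2 (hmono _ _ _ _ (by omega)))
  · intro x _ y _ h
    exact Fin.ext h

/-- Chernoff-bound claim for sample sort: drawing `s = ω·q` independent uniform samples
(with replacement) from a set `A` of `N` distinct reals and taking every `q`-th sorted
sample as a pivot, the probability that some of the resulting `ω` buckets contains more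
than `4N/ω` elements of `A` is at most `N·exp(−q/2)`. -/
theorem stmt17 (A : Finset ℝ) (N : ℕ) (hN : A.card = N) (hN1 : 1 ≤ N)
    (ω q : ℕ) (hω : 2 ≤ ω) (hq : 1 ≤ q) (s : ℕ) (hs : s = ω * q) :
    (((Finset.univ : Finset (Fin s → {x // x ∈ A})).filter
        (fun f => ∃ j < ω, (4 * (N : ℝ) / (ω : ℝ)) <
          ((bucket A s q ω f j).card : ℝ))).card : ℝ) / (N : ℝ) ^ s ≤
      (N : ℝ) * Real.exp (-(q : ℝ) / 2) := by
  have hNpos : (0 : ℝ) < N := by exact_mod_cast hN1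
  have hωpos : (0 : ℝ) < ω := by exact_mod_cast (by omega : 0 < ω)
  rw [div_le_iff₀ (by positivity)]
  set E : ℝ → Finset (Fin s → {x // x ∈ A}) := fun a =>
    ((Finset.univ : Finset (Fin s → {x // x ∈ A})).filter
        (fun f => ∃ b ∈ A, 4 * (N : ℝ) / (ω : ℝ) <
            ((A.filter (fun x => a ≤ x ∧ x ≤ b)).card : ℝ) ∧
          ((Finset.univ : Finset (Fin s)).filter
            (fun i => a ≤ (f i : ℝ) ∧ (f i : ℝ) ≤ b)).card ≤ q)) with hE
  have hsub : ((Finset.univ : Finset (Fin s → {x // x ∈ A})).filter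
        (fun f => ∃ j < ω, (4 * (N : ℝ) / (ω : ℝ)) <
          ((bucket A s q ω f j).card : ℝ))) ⊆ A.biUnion E := by
    intro f hf
    rw [Finset.mem_filter] at hf
    obtain ⟨_, j, hj, hB⟩ := hf
    have hBne : (bucket A s q ω f j).Nonempty := by
      rw [← Finset.card_pos]
      have : (0 : ℝ) < (bucket A s q ω f j).card := lt_of_le_of_lt (by positivity) hB
      exact_mod_cast this
    obtain ⟨a, ha, hamin⟩ := (bucket A s q ω f j).exists_min_image id hBne
    obtain ⟨b, hb, hbmax⟩ := (bucket A s q ω f j).exists_max_image id hBne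
    have hBA : ∀ x ∈ bucket A s q ω f j, x ∈ A := fun x hx => (Finset.mem_filter.1 hx).1
    have hconv : ∀ x ∈ A, a ≤ x → x ≤ b → x ∈ bucket A s q ω f j := by
      intro x hx hax hxb
      have ha2 := (Finset.mem_filter.1 ha).2.1
      have hb2 := (Finset.mem_filter.1 hb).2.2
      exact Finset.mem_filter.2 ⟨hx, ha2.imp_right (fun h => lt_of_lt_of_le h hax),
        hb2.imp_right (fun h => lt_of_le_of_lt hxb h)⟩
    rw [Finset.mem_biUnion]
    refine ⟨a, hBA a ha, ?_⟩
    simp only [hE]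
    rw [Finset.mem_filter]
    refine ⟨Finset.mem_univ _, b, hBA b hb, lt_of_lt_of_le hB ?_, ?_⟩
    · norm_cast
      apply Finset.card_le_card
      intro x hx
      exact Finset.mem_filter.2 ⟨hBA x hx, hamin x hx, hbmax x hx⟩
    · refine le_trans (Finset.card_le_card ?_) (bucket_samples A ω q hω hq s hs f j hj)
      intro i hi
      rw [Finset.mem_filter] at hi ⊢
      exact ⟨hi.1, hconv _ (f i).2 hi.2.1 hi.2.2⟩
  calc _ ≤ ((A.biUnion E).card : ℝ) := by exact_mod_cast Finset.card_le_card hsub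
    _ ≤ ∑ a ∈ A, ((E a).card : ℝ) := by exact_mod_cast Finset.card_biUnion_le
    _ ≤ ∑ a ∈ A, (N : ℝ) ^ s * Real.exp (-(q : ℝ) / 2) :=
      Finset.sum_le_sum fun a _ => interval_aux A N hN hN1 ω q hω s hs a
    _ = _ := by rw [Finset.sum_const, hN, nsmul_eq_mul]; ring
end
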